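/- arXiv:math/0104207 — 2 statements merged into one kernel-verified Lean document; each statement's English description precedes it below -/
import Mathlib

section
/- Let V be a finite-dimensional complex vector space of dimension d, let n ≥ 1, and let σ be a permutation of {1,…,n}. Let σ act linearly on the direct sum V^n of n copies of V by permuting the summands: σ(v₁,…,v_n) = (v_{σ(1)},…,v_{σ(n)}). Then the age of this linear automorphism equals d·(n − c(σ))/2, where c(σ) is the number of orbits of the cyclic group generated by σ on {1,…,n}. -/
/-- The unique representative `r ∈ [0,1)` with `z = exp(2 π i r)` (for `z` on the
unit circle), extracted from the argument of `z`. -/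
noncomputable def unitFrac (z : ℂ) : ℝ :=
  if 0 ≤ z.arg then z.arg / (2 * Real.pi) else z.arg / (2 * Real.pi) + 1

/-- The age of an endomorphism of a finite-dimensional complex vector space: the sum,
over the eigenvalues (roots of the characteristic polynomial, with multiplicity), of the
numbers `r ∈ [0,1)` with eigenvalue `exp(2 π i r)`. -/
noncomputable def age {V : Type*} [AddCommGroup V] [Module ℂ V] [FiniteDimensional ℂ V]
    (f : V →ₗ[ℂ] V) : ℝ :=
  (f.charpoly.roots.map unitFrac).sum

open ComplexConjugate in
theorem unitFrac_add_unitFrac_conj {z : ℂ} (hz : ‖z‖ = 1) :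
    unitFrac z + unitFrac (conj z) = if z = 1 then 0 else 1 := by
  have hpi := Real.pi_pos
  have harg : z.arg = 0 ↔ z = 1 := by
    refine ⟨fun h => ?_, fun h => by simp [h]⟩
    simpa [hz, h] using (Complex.norm_mul_exp_arg_mul_I z).symm
  unfold unitFrac
  rw [Complex.arg_conj]
  by_cases h1 : z = 1
  · simp [h1, Real.pi_ne_zero.symm]
  have h0 : z.arg ≠ 0 := fun h => h1 (harg.mp h)
  rw [if_neg h1]
  by_cases hπ : z.arg = Real.pi
  · rw [if_pos hπ, hπ, if_pos hpi.le]
    field_simp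
    norm_num
  · rw [if_neg hπ]
    rcases lt_or_gt_of_ne h0 with h | h
    · rw [if_neg (not_le.mpr h), if_pos (by linarith)]
      ring
    · rw [if_pos h.le, if_neg (by linarith)]
      ring

/-- An automorphism of finite order whose characteristic polynomial is real has age half the
codimension of its fixed subspace. -/
theorem age_eq_of_pow_eq_one {V : Type*} [AddCommGroup V] [Module ℂ V] [FiniteDimensional ℂ V]
    {f : Module.End ℂ V} {m : ℕ} (hm : m ≠ 0) (hf : f ^ m = 1)
    (hreal : f.charpoly.map (starRingEnd ℂ) = f.charpoly) :
    age f = ((Module.finrank ℂ V : ℝ) - Module.finrank ℂ (f.eigenspace 1)) / 2 := by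
  classical
  have hsplits : f.charpoly.Splits := IsAlgClosed.splits _
  have hcard : f.charpoly.roots.card = Module.finrank ℂ V := by
    rw [← hsplits.natDegree_eq_card_roots, LinearMap.charpoly_natDegree]
  have hconj : f.charpoly.roots.map (starRingEnd ℂ) = f.charpoly.roots := by
    rw [← hsplits.roots_map_of_injective (starRingEnd ℂ).injective, hreal]
  have haeval : Polynomial.aeval f (Polynomial.X ^ m - 1 : Polynomial ℂ) = 0 := by
    simp [hf]
  have hss : f.IsSemisimple := Module.End.isSemisimple_of_squarefree_aeval_eq_zero
    (Polynomial.X_pow_sub_one_separable_iff.mpr (Nat.cast_ne_zero.mpr hm)).squarefree haeval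
  have hcount : f.charpoly.roots.count 1 = Module.finrank ℂ (f.eigenspace 1) := by
    rw [Polynomial.count_roots, ← LinearMap.finrank_maxGenEigenspace_eq,
      (Module.End.isFinitelySemisimple_iff_isSemisimple.mpr hss).maxGenEigenspace_eq_eigenspace]
  have hnorm : ∀ z ∈ f.charpoly.roots, ‖z‖ = 1 := by
    intro z hz
    have hev : f.HasEigenvalue z :=
      (Module.End.hasEigenvalue_iff_isRoot_charpoly f z).mpr (Polynomial.isRoot_of_mem_roots hz)
    obtain ⟨v, hv⟩ := hev.exists_hasEigenvector
    have hpow := hv.pow_apply m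
    rw [hf, Module.End.one_apply] at hpow
    have hzm : z ^ m = 1 := by
      have : (z ^ m - 1) • v = 0 := by rw [sub_smul, one_smul, ← hpow, sub_self]
      exact sub_eq_zero.mp ((smul_eq_zero.mp this).resolve_right hv.2)
    exact Complex.norm_eq_one_of_pow_eq_one hzm hm
  have htwo : age f + age f = (f.charpoly.roots.card : ℝ) - f.charpoly.roots.count 1 := by
    have hage : age f = (f.charpoly.roots.map fun z => unitFrac (starRingEnd ℂ z)).sum := by
      rw [age, ← Function.comp_def, ← Multiset.map_map, hconj]
    nth_rw 2 [hage]
    rw [age, ← Multiset.sum_map_add,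
      Multiset.map_congr rfl fun z hz => unitFrac_add_unitFrac_conj (hnorm z hz)]
    induction f.charpoly.roots using Multiset.induction_on with
    | empty => simp
    | cons a s ih =>
      rw [Multiset.map_cons, Multiset.sum_cons, ih, Multiset.card_cons, Multiset.count_cons]
      by_cases ha : a = 1
      · simp [ha]
      · simp [ha, Ne.symm ha]
        ring
  rw [hcard, hcount] at htwo
  linarith

theorem charpoly_funLeft_map_conj {V ι : Type*} [AddCommGroup V] [Module ℂ V]
    [FiniteDimensional ℂ V] [Fintype ι] (σ : ι → ι) :
    (LinearMap.funLeft ℂ V σ).charpoly.map (starRingEnd ℂ) =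
      (LinearMap.funLeft ℂ V σ).charpoly := by
  classical
  let b := Pi.basis fun _ : ι => Module.finBasis ℂ V
  rw [← LinearMap.charpoly_toMatrix _ b, ← Matrix.charpoly_map]
  congr 1
  ext i j
  rw [Matrix.map_apply, LinearMap.toMatrix_apply, Pi.basis_repr, LinearMap.funLeft_apply,
    Pi.basis_apply]
  by_cases h : σ i.1 = j.1
  · rw [h, Pi.single_eq_same, Module.Basis.repr_self, Finsupp.single_apply]
    split_ifs <;> simp
  · rw [Pi.single_eq_of_ne h]
    simp

theorem funLeft_pow {R M ι : Type*} [Semiring R] [AddCommMonoid M] [Module R M]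
    (σ : Equiv.Perm ι) (k : ℕ) :
    (LinearMap.funLeft R M σ : Module.End R (ι → M)) ^ k = LinearMap.funLeft R M ⇑(σ ^ k) := by
  induction k with
  | zero => rfl
  | succ k ih => rw [pow_succ, ih, pow_succ', Equiv.Perm.coe_mul, LinearMap.funLeft_comp]; rfl

theorem mem_eigenspace_funLeft_one {R M ι : Type*} [CommRing R] [AddCommGroup M] [Module R M]
    {σ : ι → ι} {v : ι → M} :
    v ∈ Module.End.eigenspace (LinearMap.funLeft R M σ) 1 ↔ ∀ i, v (σ i) = v i := by
  simp [funext_iff, LinearMap.funLeft_apply]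

/-- The fixed vectors of a permutation of coordinates are the functions on its orbits. -/
def eigenspaceFunLeftOneEquiv (R M : Type*) {ι : Type*} [CommRing R] [AddCommGroup M] [Module R M]
    (σ : Equiv.Perm ι) :
    Module.End.eigenspace (LinearMap.funLeft R M σ) 1 ≃ₗ[R]
      (MulAction.orbitRel.Quotient (Subgroup.zpowers σ) ι → M) where
  toFun v := Quotient.lift v.1 <| by
    rintro a b ⟨⟨_, k, rfl⟩, rfl⟩
    have hv := mem_eigenspace_funLeft_one.mp v.2
    change v.1 ((σ ^ k) b) = v.1 b
    induction k using Int.induction_on with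
    | zero => rfl
    | succ k ih => rw [zpow_add_one, (Commute.zpow_self σ k).eq, Equiv.Perm.mul_apply, hv, ih]
    | pred k ih =>
      rw [← ih, ← hv ((σ ^ (-(k : ℤ) - 1)) b), ← Equiv.Perm.mul_apply, ← zpow_one_add,
        add_sub_cancel]
  invFun w := ⟨fun i => w (Quotient.mk _ i), mem_eigenspace_funLeft_one.mpr fun i =>
    congrArg w (Quotient.sound ⟨⟨σ, Subgroup.mem_zpowers σ⟩, rfl⟩)⟩
  map_add' v w := by ext ⟨i⟩; rfl
  map_smul' c v := by ext ⟨i⟩; rfl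
  left_inv v := rfl
  right_inv w := by ext ⟨i⟩; rfl

/-- The age of the permutation automorphism `σ : V^n → V^n`, `(σ v)_i = v_{σ(i)}`, is
`d (n - c(σ))/2` where `d = dim V` and `c(σ)` is the number of orbits of `⟨σ⟩` on
`{1,…,n}`. -/
theorem age_perm {V : Type*} [AddCommGroup V] [Module ℂ V] [FiniteDimensional ℂ V]
    (n : ℕ) (hn : 1 ≤ n) (σ : Equiv.Perm (Fin n)) :
    age (LinearMap.funLeft ℂ V σ) =
      (Module.finrank ℂ V : ℝ) *
        ((n : ℝ) -
          (Nat.card (MulAction.orbitRel.Quotient (Subgroup.zpowers σ) (Fin n)) : ℝ)) / 2 := by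
  have hpow : (LinearMap.funLeft ℂ V σ : Module.End ℂ (Fin n → V)) ^ orderOf σ = 1 := by
    rw [funLeft_pow, pow_orderOf_eq_one]
    rfl
  have : Fintype (MulAction.orbitRel.Quotient (Subgroup.zpowers σ) (Fin n)) := Fintype.ofFinite _
  rw [age_eq_of_pow_eq_one (orderOf_pos σ).ne' hpow (charpoly_funLeft_map_conj σ),
    (eigenspaceFunLeftOneEquiv ℂ V σ).finrank_eq, Module.finrank_pi_fintype,
    Module.finrank_pi_fintype, Nat.card_eq_fintype_card]
  simp only [Finset.sum_const, Finset.card_univ, Fintype.card_fin, smul_eq_mul, Nat.cast_mul]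
  ring
end

section
/- For all permutations g, h ∈ 𝔖_n one has |O(g)| + |O(h)| + |O(gh)| ≤ n + 2·|O(⟨g,h⟩)|, where |O(σ)| is the number of orbits of the cyclic group generated by σ on {1,…,n} and |O(⟨g,h⟩)| is the number of orbits of the subgroup generated by g and h on {1,…,n}. -/
/-- The number of orbits of a subgroup `H` of `𝔖_n` acting on `{1,…,n}`. -/
noncomputable def numOrbits {n : ℕ} (H : Subgroup (Equiv.Perm (Fin n))) : ℕ :=
  Nat.card (MulAction.orbitRel.Quotient H (Fin n))

open Equiv MulAction

namespace Setoid

variable {α : Type*}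

theorem card_quotient_le_of_le [Finite α] {r s : Setoid α} (hrs : r ≤ s) :
    Nat.card (Quotient s) ≤ Nat.card (Quotient r) :=
  Nat.card_le_card_of_surjective (Quotient.map' id hrs) fun q =>
    Quotient.inductionOn' q fun a => ⟨Quotient.mk'' a, rfl⟩

open Classical in
/-- The finest equivalence relation coarser than `r` that identifies `x` and `y`. -/
noncomputable def merge (r : Setoid α) (x y : α) : Setoid α :=
  ker fun z => if r z y then (Quotient.mk r x) else Quotient.mk r z

theorem merge_iff {r : Setoid α} {x y a b : α} :
    r.merge x y a b ↔ r a b ∨ (r a y ∨ r a x) ∧ (r b y ∨ r b x) := by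
  classical
  have hs : ∀ {u v}, r u v → r v u := r.symm
  have ht : ∀ {u v w}, r u v → r v w → r u w := r.trans
  have hq : ∀ u v, Quotient.mk r u = Quotient.mk r v ↔ r u v := fun _ _ => Quotient.eq
  rw [merge, ker_def]
  split_ifs <;> simp only [hq] <;> grind

theorem le_merge (r : Setoid α) (x y : α) : r ≤ r.merge x y :=
  fun _ _ h => merge_iff.2 (Or.inl h)

theorem merge_rel (r : Setoid α) (x y : α) : r.merge x y x y :=
  merge_iff.2 (Or.inr ⟨Or.inr (r.refl x), Or.inl (r.refl y)⟩)

theorem merge_le {r s : Setoid α} {x y : α} (hrs : r ≤ s) (hxy : s x y) : r.merge x y ≤ s := by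
  intro a b hab
  have hs : ∀ {u v}, s u v → s v u := s.symm
  have ht : ∀ {u v w}, s u v → s v w → s u w := s.trans
  have hle : ∀ {u v}, r u v → s u v := fun h => hrs h
  have := merge_iff.1 hab
  change s a b
  grind

theorem merge_eq_self {r : Setoid α} {x y : α} (hxy : r x y) : r.merge x y = r :=
  le_antisymm (merge_le le_rfl hxy) (le_merge r x y)

theorem card_quotient_merge_add_one [Finite α] {r : Setoid α} {x y : α} (hxy : ¬ r x y) :
    Nat.card (Quotient (r.merge x y)) + 1 = Nat.card (Quotient r) := by
  classical
  have hrange : Set.range (fun z => if r z y then (Quotient.mk r x) else Quotient.mk r z)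
      = {Quotient.mk r y}ᶜ := by
    ext q
    induction q using Quotient.inductionOn with | _ a
    simp only [Set.mem_range, Set.mem_compl_iff, Set.mem_singleton_iff]
    constructor
    · rintro ⟨z, hz⟩ ha
      split_ifs at hz with hzy
      · exact hxy (Quotient.exact (hz.trans ha))
      · exact hzy (Quotient.exact (hz.trans ha))
    · intro ha
      exact ⟨a, if_neg fun h => ha (Quotient.sound h)⟩
  rw [merge, Nat.card_congr (quotientKerEquivRange _), hrange, Nat.card_coe_set_eq,
    ← Set.ncard_singleton (Quotient.mk r y), add_comm, Set.ncard_add_ncard_compl]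

theorem card_quotient_le_merge_add_one [Finite α] (r : Setoid α) (x y : α) :
    Nat.card (Quotient r) ≤ Nat.card (Quotient (r.merge x y)) + 1 := by
  by_cases hxy : r x y
  · rw [merge_eq_self hxy]
    exact Nat.le_succ _
  · exact (card_quotient_merge_add_one hxy).ge

theorem rel_swap_apply [DecidableEq α] {r : Setoid α} {x y : α} (hxy : r x y) (z : α) :
    r (swap x y z) z := by
  rw [swap_apply_def]
  split_ifs with h₁ h₂
  · exact h₁ ▸ r.symm hxy
  · exact h₂ ▸ hxy
  · exact r.refl z

end Setoid

namespace Equiv.Perm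

variable {α : Type*}

theorem orbitRel_closure_le_iff {S : Set (Perm α)} {r : Setoid α} :
    orbitRel (Subgroup.closure S) α ≤ r ↔ ∀ s ∈ S, ∀ z, r (s z) z := by
  constructor
  · intro h s hs z
    exact h (orbitRel_apply.2 ⟨⟨s, Subgroup.subset_closure hs⟩, rfl⟩)
  · rintro h a b hab
    obtain ⟨⟨k, hk⟩, rfl⟩ := orbitRel_apply.1 hab
    clear hab
    change r (k b) b
    induction hk using Subgroup.closure_induction generalizing b with
    | mem s hs => exact h s hs b
    | one => exact r.refl b
    | mul u v _ _ hu hv => exact r.trans (hu (b := v b)) (hv (b := b))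
    | inv u _ hu => simpa using r.symm (hu (b := u⁻¹ b))

theorem orbitRel_zpowers_le_iff {σ : Perm α} {r : Setoid α} :
    orbitRel (Subgroup.zpowers σ) α ≤ r ↔ ∀ z, r (σ z) z := by
  rw [Subgroup.zpowers_eq_closure, orbitRel_closure_le_iff]
  simp

theorem orbitRel_apply_self {H : Subgroup (Perm α)} {σ : Perm α} (hσ : σ ∈ H) (z : α) :
    orbitRel H α (σ z) z :=
  orbitRel_apply.2 ⟨⟨σ, hσ⟩, rfl⟩

theorem card_orbits_one :
    Nat.card (orbitRel.Quotient (Subgroup.zpowers (1 : Perm α)) α) = Nat.card α := by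
  have : orbitRel (Subgroup.zpowers (1 : Perm α)) α = ⊥ :=
    le_bot_iff.1 (orbitRel_zpowers_le_iff.2 fun _ => rfl)
  rw [orbitRel.Quotient, this]
  exact Nat.card_congr Setoid.quotientBotEquiv

variable [DecidableEq α]

theorem merge_orbitRel_mul_swap_le (σ : Perm α) (x y : α) :
    (orbitRel (Subgroup.zpowers (σ * swap x y)) α).merge x y
      ≤ (orbitRel (Subgroup.zpowers σ) α).merge x y := by
  refine Setoid.merge_le (orbitRel_zpowers_le_iff.2 fun z => ?_) (Setoid.merge_rel _ x y)
  exact Setoid.trans' _ (Setoid.le_merge _ x y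
    (orbitRel_apply_self (Subgroup.mem_zpowers σ) (swap x y z)))
    (Setoid.rel_swap_apply (Setoid.merge_rel _ x y) z)

theorem merge_orbitRel_mul_swap (σ : Perm α) (x y : α) :
    (orbitRel (Subgroup.zpowers (σ * swap x y)) α).merge x y
      = (orbitRel (Subgroup.zpowers σ) α).merge x y := by
  refine le_antisymm (merge_orbitRel_mul_swap_le σ x y) ?_
  have := merge_orbitRel_mul_swap_le (σ * swap x y) x y
  rwa [mul_swap_mul_self] at this

theorem orbitRel_closure_mul_swap_le (g h : Perm α) (x y : α) :
    orbitRel (Subgroup.closure {g, h * swap x y}) α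
      ≤ (orbitRel (Subgroup.closure {g, h}) α).merge x y := by
  rw [orbitRel_closure_le_iff]
  rintro s (rfl | rfl) z
  · exact Setoid.le_merge _ x y (orbitRel_apply_self (Subgroup.subset_closure (by simp)) z)
  · exact Setoid.trans' _ (Setoid.le_merge _ x y
      (orbitRel_apply_self (Subgroup.subset_closure (by simp)) (swap x y z)))
      (Setoid.rel_swap_apply (Setoid.merge_rel _ x y) z)

variable [Finite α]

theorem orbitRel_mul_swap_of_not_orbitRel {σ : Perm α} {x y : α}
    (hxy : ¬ orbitRel (Subgroup.zpowers σ) α x y) :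
    orbitRel (Subgroup.zpowers (σ * swap x y)) α x y := by
  set r := orbitRel (Subgroup.zpowers (σ * swap x y)) α
  have hstep (z : α) : r (σ (swap x y z)) z := orbitRel_apply_self (Subgroup.mem_zpowers _) z
  by_contra hr
  have hpow (k : ℕ) : r ((σ ^ (k + 1)) y) x := by
    induction k with
    | zero => simpa using hstep x
    | succ k ih =>
      have hx : (σ ^ (k + 1)) y ≠ x := fun h =>
        hxy (h ▸ orbitRel_apply_self (Subgroup.npow_mem_zpowers σ (k + 1)) y)
      have hy : (σ ^ (k + 1)) y ≠ y := fun h => hr (r.symm (h ▸ ih))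
      have := hstep ((σ ^ (k + 1)) y)
      rw [swap_apply_of_ne_of_ne hx hy, ← mul_apply, ← pow_succ'] at this
      exact r.trans this ih
  have := hpow (orderOf σ - 1)
  rw [Nat.sub_add_cancel (orderOf_pos σ), pow_orderOf_eq_one] at this
  exact hr (r.symm this)

theorem card_orbits_mul_swap_le (σ : Perm α) (x y : α) :
    Nat.card (orbitRel.Quotient (Subgroup.zpowers (σ * swap x y)) α)
      ≤ Nat.card (orbitRel.Quotient (Subgroup.zpowers σ) α) + 1 := by
  refine (Setoid.card_quotient_le_merge_add_one _ x y).trans ?_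
  rw [merge_orbitRel_mul_swap]
  exact Nat.add_le_add_right (Setoid.card_quotient_le_of_le (Setoid.le_merge _ x y)) 1

theorem card_orbits_mul_swap_add_one {σ : Perm α} {x y : α}
    (hxy : ¬ orbitRel (Subgroup.zpowers σ) α x y) :
    Nat.card (orbitRel.Quotient (Subgroup.zpowers (σ * swap x y)) α) + 1
      = Nat.card (orbitRel.Quotient (Subgroup.zpowers σ) α) := by
  have := Setoid.card_quotient_merge_add_one hxy
  rwa [← merge_orbitRel_mul_swap,
    Setoid.merge_eq_self (orbitRel_mul_swap_of_not_orbitRel hxy)] at this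

/-- If the inequality holds for `(g, h)`, it holds for `(g, h * swap x y)` when right
multiplication by `swap x y` joins two cycles of `h`. -/
theorem card_orbits_add_le_mul_swap {g h : Perm α} {x y : α}
    (hxy : ¬ orbitRel (Subgroup.zpowers h) α x y)
    (ih : Nat.card (orbitRel.Quotient (Subgroup.zpowers g) α)
        + Nat.card (orbitRel.Quotient (Subgroup.zpowers h) α)
        + Nat.card (orbitRel.Quotient (Subgroup.zpowers (g * h)) α)
      ≤ Nat.card α + 2 * Nat.card (orbitRel.Quotient (Subgroup.closure {g, h}) α)) :
    Nat.card (orbitRel.Quotient (Subgroup.zpowers g) α)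
        + Nat.card (orbitRel.Quotient (Subgroup.zpowers (h * swap x y)) α)
        + Nat.card (orbitRel.Quotient (Subgroup.zpowers (g * (h * swap x y))) α)
      ≤ Nat.card α
        + 2 * Nat.card (orbitRel.Quotient (Subgroup.closure {g, h * swap x y}) α) := by
  have hh := card_orbits_mul_swap_add_one hxy
  have hle := Setoid.card_quotient_le_of_le (orbitRel_closure_mul_swap_le g h x y)
  rw [← mul_assoc]
  by_cases hG : orbitRel (Subgroup.closure {g, h}) α x y
  · rw [Setoid.merge_eq_self hG] at hle
    have hgh := card_orbits_mul_swap_le (g * h) x y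
    unfold orbitRel.Quotient at *
    omega
  · have hmerge := Setoid.card_quotient_merge_add_one hG
    have hgh := card_orbits_mul_swap_add_one (σ := g * h) (x := x) (y := y) fun h' =>
      hG (orbitRel_zpowers_le_iff.2 (fun z => orbitRel_apply_self (Subgroup.mul_mem _
        (Subgroup.subset_closure (by simp)) (Subgroup.subset_closure (by simp))) z) h')
    unfold orbitRel.Quotient at *
    omega

theorem card_orbits_add_le (g h : Perm α) :
    Nat.card (orbitRel.Quotient (Subgroup.zpowers g) α)
        + Nat.card (orbitRel.Quotient (Subgroup.zpowers h) α)
        + Nat.card (orbitRel.Quotient (Subgroup.zpowers (g * h)) α)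
      ≤ Nat.card α + 2 * Nat.card (orbitRel.Quotient (Subgroup.closure {g, h}) α) := by
  have := Fintype.ofFinite α
  induction hk : h.support.card using Nat.strong_induction_on generalizing h with
  | _ k ih
  by_cases h1 : h = 1
  · subst h1
    have hcl : Subgroup.closure {g, 1} = Subgroup.zpowers g := by
      rw [Set.pair_comm, Subgroup.closure_insert_one, Subgroup.zpowers_eq_closure]
    rw [card_orbits_one, mul_one, hcl]
    omega
  · obtain ⟨y, hy⟩ : ∃ y, h y ≠ y := by
      by_contra! hall
      exact h1 (Perm.ext hall)
    have hfix : (h * swap (h y) y) (h y) = h y := by simp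
    have hnot : ¬ orbitRel (Subgroup.zpowers (h * swap (h y) y)) α (h y) y := by
      intro hrel
      obtain ⟨⟨_, m, rfl⟩, hm⟩ := orbitRel_apply.1 (Setoid.symm' _ hrel)
      exact hy ((zpow_apply_eq_self_of_apply_eq_self hfix m).symm.trans hm)
    have hlt : (h * swap (h y) y).support.card < h.support.card := by
      refine Finset.card_lt_card ((Finset.ssubset_iff_of_subset fun z hz => ?_).2
        ⟨h y, by simpa using hy, by simp⟩)
      rw [mem_support] at hz ⊢
      intro hzz
      have hzy : z ≠ y := fun h' => hy (h' ▸ hzz)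
      have hzx : z ≠ h y := fun h' => hz (h' ▸ hfix)
      exact hz (by rw [mul_apply, swap_apply_of_ne_of_ne hzx hzy, hzz])
    have := card_orbits_add_le_mul_swap hnot (ih _ (hk ▸ hlt) _ rfl)
    rwa [mul_swap_mul_self] at this

end Equiv.Perm

/-- For `g, h ∈ 𝔖_n` one has `|O(g)| + |O(h)| + |O(gh)| ≤ n + 2 |O(⟨g,h⟩)|`. -/
theorem orbit_count_inequality {n : ℕ} (g h : Equiv.Perm (Fin n)) :
    numOrbits (Subgroup.zpowers g) + numOrbits (Subgroup.zpowers h)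
        + numOrbits (Subgroup.zpowers (g * h))
      ≤ n + 2 * numOrbits (Subgroup.closure {g, h}) := by
  simpa [numOrbits] using Equiv.Perm.card_orbits_add_le g h
end
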